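/- Let ω : ℝ → ℝ be Lipschitz and bounded. For Y > sup ω, set R_Y := {y ∈ ℝ² : ω(y₁) < y₂ < Y}, and say that property (K_Y) holds if there exists C_Y > 0 such that every smooth vector field u : closure(R_Y) → ℝ² with ∫_{R_Y}(|u|²+|∇u|²) < ∞ and u·ν = 0 on Γ satisfies ∫_{R_Y} |u|² ≤ C_Y ∫_{R_Y} |D(u)|². If (K_{Y₀}) holds for some Y₀ > sup ω, then (K_Y) holds for every Y > sup ω. -/

import Mathlib

open MeasureTheory Real Set Filter

noncomputable section

/-- The layer `R_Y = {y : ω(y₁) < y₂ < Y}`. -/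
def layerRY (ω : ℝ → ℝ) (Y : ℝ) : Set (ℝ × ℝ) := {y : ℝ × ℝ | ω y.1 < y.2 ∧ y.2 < Y}

/-- Squared Euclidean norm of a vector of `ℝ²`. -/
def vsq (w : ℝ × ℝ) : ℝ := w.1 ^ 2 + w.2 ^ 2

/-- Squared Frobenius norm of the full gradient `∇u`. -/
def gradSq (u : ℝ × ℝ → ℝ × ℝ) (y : ℝ × ℝ) : ℝ :=
  vsq (fderiv ℝ u y (1, 0)) + vsq (fderiv ℝ u y (0, 1))

/-- Squared Frobenius norm of the symmetric gradient `D(u) = (∇u + (∇u)ᵀ)/2`. -/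
def symmGradSq (u : ℝ × ℝ → ℝ × ℝ) (y : ℝ × ℝ) : ℝ :=
  (fderiv ℝ u y (1, 0)).1 ^ 2 + (fderiv ℝ u y (0, 1)).2 ^ 2 +
    2 * (((fderiv ℝ u y (1, 0)).2 + (fderiv ℝ u y (0, 1)).1) / 2) ^ 2

/-- The tangency condition `u · ν = 0` on `Γ = {y₂ = ω(y₁)}`. -/
def TangentOn (ω : ℝ → ℝ) (u : ℝ × ℝ → ℝ × ℝ) : Prop :=
  ∀ᵐ y₁ ∂(volume : Measure ℝ),
    (u (y₁, ω y₁)).1 * (-(deriv ω y₁)) + (u (y₁, ω y₁)).2 = 0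

/-- Property `(K_Y)`: a uniform Korn-type inequality
`∫_{R_Y} |u|² ≤ C_Y ∫_{R_Y} |D(u)|²` holds for all smooth vector fields with finite
`H¹(R_Y)` norm that are tangent to `Γ`. -/
def KornProp (ω : ℝ → ℝ) (Y : ℝ) : Prop :=
  ∃ C > 0, ∀ u : ℝ × ℝ → ℝ × ℝ, ContDiff ℝ (⊤ : ℕ∞) u →
    IntegrableOn (fun y => vsq (u y) + gradSq u y) (layerRY ω Y) volume →
    TangentOn ω u →
    (∫ y in layerRY ω Y, vsq (u y)) ≤ C * ∫ y in layerRY ω Y, symmGradSq u y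

/-!
The component of `u` along `(±1, 1)` varies along a segment of that direction at a rate controlled
by `D(u)`. Sliding a point of `R_Y` down such a segment until it lies below a level
`a ∈ (sup ω, Y)` therefore bounds `∫_{R_Y} |u|²` by `∫_{R_a} |u|² + ∫_{R_Y} |D(u)|²`.

Let now `η` be a ramp vanishing below `a < min Y Y₀`, let `Φₓ` be the vertical compression
`y₂ ↦ y₂ - x η(y₂)` and let `x` range over an interval `[1, t]` for which `Φₓ` maps `R_{Y₀}` into
`R_Y`. The combination `(t Φ₁^*u - Φₜ^*u) / (t - 1)` of covector pullbacks is defined on `R_{Y₀}`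
and equals `u` below `a`, so it is still tangent to `Γ`. In its symmetric gradient, `η''` only
multiplies the difference of `u₂` at the two ends of a vertical segment, which is again controlled
by `D(u)`. Hence `∫_{R_{Y₀}} |D|²` of the extension is bounded by `∫_{R_Y} |D(u)|²` alone, and
`(K_{Y₀})` applied to the extension bounds `∫_{R_a} |u|²`.
-/

theorem vsq_nonneg (w : ℝ × ℝ) : 0 ≤ vsq w :=
  add_nonneg (sq_nonneg _) (sq_nonneg _)

theorem vsq_smul (c : ℝ) (w : ℝ × ℝ) : vsq (c • w) = c ^ 2 * vsq w := by
  simp only [vsq, Prod.smul_fst, Prod.smul_snd, smul_eq_mul]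
  ring

theorem vsq_sub_le (v w : ℝ × ℝ) : vsq (v - w) ≤ 2 * vsq v + 2 * vsq w := by
  simp only [vsq, Prod.fst_sub, Prod.snd_sub]
  linarith [sq_nonneg (v.1 + w.1), sq_nonneg (v.2 + w.2)]

theorem vsq_mul_le {m n : ℝ} (hm : |m| ≤ 1) (hn : |n| ≤ 1) (w : ℝ × ℝ) :
    vsq (m * w.1, n * w.2) ≤ vsq w := by
  simp only [vsq, mul_pow]
  exact add_le_add (mul_le_of_le_one_left (sq_nonneg _) ((sq_le_one_iff_abs_le_one m).2 hm))
    (mul_le_of_le_one_left (sq_nonneg _) ((sq_le_one_iff_abs_le_one n).2 hn))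

/-- Squared Frobenius norm of the symmetric part of the `2 × 2` matrix with columns `v`, `w`, so
that `symmGradSq u p = strainSq (∂₁u p) (∂₂u p)`. -/
def strainSq (v w : ℝ × ℝ) : ℝ := v.1 ^ 2 + w.2 ^ 2 + 2 * ((v.2 + w.1) / 2) ^ 2

theorem strainSq_nonneg (v w : ℝ × ℝ) : 0 ≤ strainSq v w := by
  unfold strainSq
  positivity

theorem strainSq_le_vsq_add_vsq (v w : ℝ × ℝ) : strainSq v w ≤ vsq v + vsq w := by
  unfold strainSq vsq
  linarith [sq_nonneg (v.2 - w.1)]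

theorem strainSq_smul (c : ℝ) (v w : ℝ × ℝ) :
    strainSq (c • v) (c • w) = c ^ 2 * strainSq v w := by
  simp only [strainSq, Prod.smul_fst, Prod.smul_snd, smul_eq_mul]
  ring

theorem strainSq_sub_le (v w v' w' : ℝ × ℝ) :
    strainSq (v - v') (w - w') ≤ 2 * strainSq v w + 2 * strainSq v' w' := by
  simp only [strainSq, Prod.fst_sub, Prod.snd_sub]
  linarith [sq_nonneg (v.1 + v'.1), sq_nonneg (w.2 + w'.2),
    sq_nonneg ((v.2 + w.1) / 2 + (v'.2 + w'.1) / 2)]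

theorem strainSq_smul_sub_smul_sub_snd_le (q r e : ℝ) (v w v' w' : ℝ × ℝ) :
    strainSq (q • v - r • v') (q • w - r • w' - (0, e)) ≤
      4 * q ^ 2 * strainSq v w + 4 * r ^ 2 * strainSq v' w' + 2 * e ^ 2 := by
  have hsub : strainSq (q • v - r • v') (q • w - r • w' - (0, e)) ≤
      2 * strainSq (q • v - r • v') (q • w - r • w') + 2 * e ^ 2 := by
    simpa [strainSq] using strainSq_sub_le (q • v - r • v') (q • w - r • w') 0 (0, e)
  have hcomb := strainSq_sub_le (q • v) (q • w) (r • v') (r • w')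
  rw [strainSq_smul, strainSq_smul] at hcomb
  linarith

theorem strainSq_rescale_le {m : ℝ} (hm : |m| ≤ 1) (v w : ℝ × ℝ) :
    strainSq (v.1, m * v.2) (m * w.1, m ^ 2 * w.2) ≤ strainSq v w := by
  have hm2 : m ^ 2 ≤ 1 := (sq_le_one_iff_abs_le_one m).2 hm
  have hdiag : (m ^ 2 * w.2) ^ 2 ≤ w.2 ^ 2 := by
    rw [mul_pow]
    exact mul_le_of_le_one_left (sq_nonneg _) (pow_le_one₀ (sq_nonneg m) hm2)
  have hoff : (m * ((v.2 + w.1) / 2)) ^ 2 ≤ ((v.2 + w.1) / 2) ^ 2 := by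
    rw [mul_pow]
    exact mul_le_of_le_one_left (sq_nonneg _) hm2
  calc strainSq (v.1, m * v.2) (m * w.1, m ^ 2 * w.2)
      = v.1 ^ 2 + (m ^ 2 * w.2) ^ 2 + 2 * (m * ((v.2 + w.1) / 2)) ^ 2 := by
        simp only [strainSq]
        ring
    _ ≤ strainSq v w := by
        unfold strainSq
        linarith

/-- The component `k w₁ + w₂` of `w` along `(k, 1)`, without normalisation. -/
def dirComponent (k : ℝ) : ℝ × ℝ →L[ℝ] ℝ :=
  k • ContinuousLinearMap.fst ℝ ℝ ℝ + ContinuousLinearMap.snd ℝ ℝ ℝ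

theorem dirComponent_apply (k : ℝ) (w : ℝ × ℝ) : dirComponent k w = k * w.1 + w.2 := rfl

theorem dirComponent_sq_le (k : ℝ) (w : ℝ × ℝ) :
    dirComponent k w ^ 2 ≤ (k ^ 2 + 1) * vsq w := by
  rw [dirComponent_apply, vsq]
  linarith [sq_nonneg (w.1 - k * w.2)]

theorem vsq_eq_dirComponent_sq (w : ℝ × ℝ) :
    vsq w = 1 / 2 * dirComponent 1 w ^ 2 + 1 / 2 * dirComponent (-1) w ^ 2 := by
  simp only [vsq, dirComponent_apply]
  ring

theorem dirComponent_smul_add_sq_le (k : ℝ) (v w : ℝ × ℝ) :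
    dirComponent k (k • v + w) ^ 2 ≤ (k ^ 2 + 1) ^ 2 * strainSq v w := by
  simp only [dirComponent_apply, strainSq, Prod.fst_add, Prod.snd_add, Prod.smul_fst,
    Prod.smul_snd, smul_eq_mul]
  linarith [sq_nonneg (k ^ 2 * w.2 - v.1), sq_nonneg (k * v.1 - (v.2 + w.1) / 2 * k ^ 2),
    sq_nonneg (k * w.2 - (v.2 + w.1) / 2)]

/-- The density `|u|² + |∇u|²` of the squared `H¹` norm. -/
def h1Density (u : ℝ × ℝ → ℝ × ℝ) (p : ℝ × ℝ) : ℝ := vsq (u p) + gradSq u p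

theorem gradSq_nonneg (u : ℝ × ℝ → ℝ × ℝ) (p : ℝ × ℝ) : 0 ≤ gradSq u p :=
  add_nonneg (vsq_nonneg _) (vsq_nonneg _)

theorem h1Density_nonneg (u : ℝ × ℝ → ℝ × ℝ) (p : ℝ × ℝ) : 0 ≤ h1Density u p :=
  add_nonneg (vsq_nonneg _) (gradSq_nonneg _ _)

theorem symmGradSq_nonneg (u : ℝ × ℝ → ℝ × ℝ) (p : ℝ × ℝ) : 0 ≤ symmGradSq u p :=
  strainSq_nonneg _ _

theorem symmGradSq_le_gradSq (u : ℝ × ℝ → ℝ × ℝ) (p : ℝ × ℝ) : symmGradSq u p ≤ gradSq u p :=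
  strainSq_le_vsq_add_vsq _ _

theorem fderiv_smul_sub_smul_apply {v w : ℝ × ℝ → ℝ × ℝ} {p : ℝ × ℝ}
    (hv : DifferentiableAt ℝ v p) (hw : DifferentiableAt ℝ w p) (q r : ℝ) (e : ℝ × ℝ) :
    fderiv ℝ (q • v - r • w) p e = q • fderiv ℝ v p e - r • fderiv ℝ w p e := by
  rw [fderiv_sub (hv.const_smul q) (hw.const_smul r), fderiv_const_smul hv, fderiv_const_smul hw]
  rfl

theorem h1Density_smul_sub_smul_le {v w : ℝ × ℝ → ℝ × ℝ} {p : ℝ × ℝ}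
    (hv : DifferentiableAt ℝ v p) (hw : DifferentiableAt ℝ w p) (q r : ℝ) :
    h1Density (q • v - r • w) p ≤ 2 * q ^ 2 * h1Density v p + 2 * r ^ 2 * h1Density w p := by
  have hle : ∀ a b : ℝ × ℝ, vsq (q • a - r • b) ≤ 2 * q ^ 2 * vsq a + 2 * r ^ 2 * vsq b :=
    fun a b => by
      have := vsq_sub_le (q • a) (r • b)
      rw [vsq_smul, vsq_smul] at this
      linarith
  simp only [h1Density, gradSq, fderiv_smul_sub_smul_apply hv hw, Pi.sub_apply, Pi.smul_apply]
  linarith [hle (v p) (w p), hle (fderiv ℝ v p (1, 0)) (fderiv ℝ w p (1, 0)),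
    hle (fderiv ℝ v p (0, 1)) (fderiv ℝ w p (0, 1))]

theorem continuous_vsq : Continuous vsq := by
  unfold vsq
  fun_prop

section Continuity

variable {u : ℝ × ℝ → ℝ × ℝ}

theorem continuous_fderiv_apply_const (hu : ContDiff ℝ 1 u) (e : ℝ × ℝ) :
    Continuous fun p => fderiv ℝ u p e :=
  (hu.continuous_fderiv one_ne_zero).clm_apply continuous_const

theorem continuous_h1Density (hu : ContDiff ℝ 1 u) : Continuous (h1Density u) :=
  (continuous_vsq.comp hu.continuous).add
    ((continuous_vsq.comp (continuous_fderiv_apply_const hu _)).add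
      (continuous_vsq.comp (continuous_fderiv_apply_const hu _)))

theorem continuous_symmGradSq (hu : ContDiff ℝ 1 u) : Continuous (symmGradSq u) := by
  have := continuous_fderiv_apply_const hu
  unfold symmGradSq
  fun_prop

end Continuity

theorem sq_sub_le_mul_integral_deriv_sq {φ φ' : ℝ → ℝ} {s t : ℝ} (hst : s ≤ t)
    (hφ : ∀ x, HasDerivAt φ (φ' x) x) (hφ' : Continuous φ') :
    (φ t - φ s) ^ 2 ≤ (t - s) * ∫ x in s..t, φ' x ^ 2 := by
  rcases hst.eq_or_lt with rfl | hlt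
  · simp
  have hint : ∫ x in s..t, φ' x = φ t - φ s :=
    intervalIntegral.integral_eq_sub_of_hasDerivAt (fun x _ => hφ x)
      (hφ'.intervalIntegrable _ _)
  set m := φ t - φ s
  have hnonneg : 0 ≤ ∫ x in s..t, ((t - s) * φ' x - m) ^ 2 :=
    intervalIntegral.integral_nonneg hst fun _ _ => sq_nonneg _
  have hexpand : ∫ x in s..t, ((t - s) * φ' x - m) ^ 2 =
      (t - s) * ((t - s) * (∫ x in s..t, φ' x ^ 2) - m ^ 2) := by
    have h : ∀ x, ((t - s) * φ' x - m) ^ 2 =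
        (t - s) ^ 2 * φ' x ^ 2 - 2 * (t - s) * m * φ' x + m ^ 2 := fun x => by ring
    simp only [h]
    rw [intervalIntegral.integral_add, intervalIntegral.integral_sub,
      intervalIntegral.integral_const_mul, intervalIntegral.integral_const_mul, hint,
      intervalIntegral.integral_const, smul_eq_mul]
    · ring
    all_goals exact Continuous.intervalIntegrable (by fun_prop) _ _
  rw [hexpand] at hnonneg
  exact sub_nonneg.1 (nonneg_of_mul_nonneg_right hnonneg (sub_pos.2 hlt))

/-! ### Slides -/

/-- The map `p ↦ p - x τ(p₂) (k, 1)`, which moves every horizontal line along the direction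
`(k, 1)`. -/
def slide (k : ℝ) (τ : ℝ → ℝ) (x : ℝ) (p : ℝ × ℝ) : ℝ × ℝ :=
  (p.1 - k * (x * τ p.2), p.2 - x * τ p.2)

section Slide

variable {k : ℝ} {τ : ℝ → ℝ} {u : ℝ × ℝ → ℝ × ℝ}

theorem slide_zero (k : ℝ) (τ : ℝ → ℝ) (p : ℝ × ℝ) : slide k τ 0 p = p := by simp [slide]

theorem continuous_slide (hτ : Continuous τ) : Continuous (Function.uncurry (slide k τ)) := by
  simp only [Function.uncurry_def, slide]
  fun_prop

theorem continuous_slide_right (hτ : Continuous τ) (x : ℝ) : Continuous (slide k τ x) :=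
  (continuous_slide hτ).comp (Continuous.prodMk_right x)

theorem hasDerivAt_slide (k : ℝ) (τ : ℝ → ℝ) (p : ℝ × ℝ) (x : ℝ) :
    HasDerivAt (fun x => slide k τ x p) (-τ p.2 • (k • (1, 0) + (0, 1))) x := by
  have h : HasDerivAt (fun x : ℝ => x * τ p.2) (τ p.2) x := hasDerivAt_mul_const _
  exact (((h.const_mul k).const_sub p.1).prodMk (h.const_sub p.2)).congr_deriv
    (by ext <;> simp [mul_comm])

theorem sq_dirComponent_slide_sub_le (hu : ContDiff ℝ 1 u) {s t : ℝ} (hst : s ≤ t)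
    (p : ℝ × ℝ) :
    (dirComponent k (u (slide k τ t p)) - dirComponent k (u (slide k τ s p))) ^ 2 ≤
      (t - s) * (((k ^ 2 + 1) * τ p.2) ^ 2 * ∫ x in s..t, symmGradSq u (slide k τ x p)) := by
  have hpath : Continuous fun x => slide k τ x p :=
    continuous_iff_continuousAt.2 fun x => (hasDerivAt_slide k τ p x).continuousAt
  let φ' : ℝ → ℝ := fun x => dirComponent k (fderiv ℝ u (slide k τ x p)
    (-τ p.2 • (k • (1, 0) + (0, 1))))
  have hφ : ∀ x, HasDerivAt (fun x => dirComponent k (u (slide k τ x p))) (φ' x) x := fun x =>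
    (dirComponent k).hasFDerivAt.comp_hasDerivAt x
      ((hu.differentiable one_ne_zero _).hasFDerivAt.comp_hasDerivAt x (hasDerivAt_slide k τ p x))
  have hφ'_cont : Continuous φ' :=
    (dirComponent k).continuous.comp ((continuous_fderiv_apply_const hu _).comp hpath)
  have hφ'_le : ∀ x, φ' x ^ 2 ≤
      ((k ^ 2 + 1) * τ p.2) ^ 2 * symmGradSq u (slide k τ x p) := fun x => by
    simp only [φ', map_smul, map_add (fderiv ℝ u _), smul_eq_mul, mul_pow, neg_sq]
    rw [mul_right_comm, mul_comm]
    exact mul_le_mul_of_nonneg_right (dirComponent_smul_add_sq_le k _ _) (sq_nonneg _)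
  have hD : Continuous fun x => symmGradSq u (slide k τ x p) :=
    (continuous_symmGradSq hu).comp hpath
  refine (sq_sub_le_mul_integral_deriv_sq hst hφ hφ'_cont).trans
    (mul_le_mul_of_nonneg_left ?_ (sub_nonneg.2 hst))
  rw [← intervalIntegral.integral_const_mul]
  exact intervalIntegral.integral_mono hst
    ((hφ'_cont.pow 2).intervalIntegrable (μ := volume) _ _)
    ((continuous_const.mul hD).intervalIntegrable _ _) hφ'_le

theorem dirComponent_sq_le_vsq_slide_add_integral (hu : ContDiff ℝ 1 u) {t b : ℝ} (ht : 0 ≤ t)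
    {p : ℝ × ℝ} (hb : |τ p.2| ≤ b) :
    dirComponent k (u p) ^ 2 ≤ 2 * (k ^ 2 + 1) * vsq (u (slide k τ t p)) +
      2 * (t * ((k ^ 2 + 1) * b) ^ 2) * ∫ x in 0..t, symmGradSq u (slide k τ x p) := by
  have hdiff := sq_dirComponent_slide_sub_le (k := k) (τ := τ) hu ht p
  rw [slide_zero, sub_zero] at hdiff
  have hI : 0 ≤ ∫ x in 0..t, symmGradSq u (slide k τ x p) :=
    intervalIntegral.integral_nonneg ht fun _ _ => symmGradSq_nonneg _ _
  have hτ_sq : ((k ^ 2 + 1) * τ p.2) ^ 2 ≤ ((k ^ 2 + 1) * b) ^ 2 := by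
    rw [mul_pow, mul_pow]
    exact mul_le_mul_of_nonneg_left (sq_le_sq.2 (hb.trans (le_abs_self b))) (sq_nonneg _)
  have hpath : t * (((k ^ 2 + 1) * τ p.2) ^ 2 * ∫ x in 0..t, symmGradSq u (slide k τ x p)) ≤
      t * (((k ^ 2 + 1) * b) ^ 2 * ∫ x in 0..t, symmGradSq u (slide k τ x p)) := by
    gcongr
  linarith [dirComponent_sq_le k (u (slide k τ t p)),
    sq_nonneg (dirComponent k (u p) - 2 * dirComponent k (u (slide k τ t p)))]

end Slide

section ChangeOfVariables

theorem lintegral_comp_le_of_le_deriv {g g' : ℝ → ℝ} {c : ℝ} (hc : 0 < c)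
    (hg : ∀ y, HasDerivAt g (g' y) y) (hcg : ∀ y, c ≤ g' y) (F : ℝ → ENNReal) :
    ∫⁻ y, F (g y) ≤ ENNReal.ofReal c⁻¹ * ∫⁻ y, F y := by
  have hinj : Function.Injective g :=
    (strictMono_of_hasDerivAt_pos hg fun y => hc.trans_le (hcg y)).injective
  have hsubst := lintegral_image_eq_lintegral_abs_deriv_mul MeasurableSet.univ
    (fun y _ => (hg y).hasDerivWithinAt) hinj.injOn F
  rw [setLIntegral_univ] at hsubst
  calc ∫⁻ y, F (g y)
      = ENNReal.ofReal c⁻¹ * ∫⁻ y, ENNReal.ofReal c * F (g y) := by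
        rw [lintegral_const_mul' _ _ ENNReal.ofReal_ne_top, ← mul_assoc,
          ← ENNReal.ofReal_mul (by positivity), inv_mul_cancel₀ hc.ne', ENNReal.ofReal_one,
          one_mul]
    _ ≤ ENNReal.ofReal c⁻¹ * ∫⁻ y, ENNReal.ofReal |g' y| * F (g y) := by
        gcongr with y
        exact (hcg y).trans (le_abs_self _)
    _ ≤ ENNReal.ofReal c⁻¹ * ∫⁻ y, F y := by
        rw [← hsubst]
        gcongr
        exact Measure.restrict_le_self

theorem lintegral_comp_shear_le {g g' h : ℝ → ℝ} {c : ℝ} (hc : 0 < c)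
    (hg : ∀ y, HasDerivAt g (g' y) y) (hcg : ∀ y, c ≤ g' y) (hh : Measurable h)
    {F : ℝ × ℝ → ENNReal} (hF : Measurable F) :
    ∫⁻ p : ℝ × ℝ, F (p.1 - h p.2, g p.2) ≤ ENNReal.ofReal c⁻¹ * ∫⁻ p, F p := by
  have hg_meas : Measurable g :=
    (continuous_iff_continuousAt.2 fun y => (hg y).continuousAt).measurable
  have hF_shear : Measurable fun p : ℝ × ℝ => F (p.1 - h p.2, g p.2) := hF.comp (by fun_prop)
  rw [Measure.volume_eq_prod, lintegral_prod_symm _ hF_shear.aemeasurable,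
    lintegral_prod_symm _ hF.aemeasurable]
  calc ∫⁻ y, ∫⁻ x, F (x - h y, g y)
      = ∫⁻ y, ∫⁻ x, F (x, g y) :=
        lintegral_congr fun y => lintegral_sub_right_eq_self (fun x => F (x, g y)) (h y)
    _ ≤ ENNReal.ofReal c⁻¹ * ∫⁻ y, ∫⁻ x, F (x, y) :=
        lintegral_comp_le_of_le_deriv hc hg hcg fun y => ∫⁻ x, F (x, y)

theorem lintegral_comp_slide_le {k : ℝ} {τ τ' : ℝ → ℝ} {x c : ℝ} (hc : 0 < c)
    (hτ : ∀ y, HasDerivAt τ (τ' y) y) (hcτ : ∀ y, c ≤ 1 - x * τ' y)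
    {F : ℝ × ℝ → ENNReal} (hF : Measurable F) :
    ∫⁻ p, F (slide k τ x p) ≤ ENNReal.ofReal c⁻¹ * ∫⁻ p, F p := by
  have hτ_meas : Measurable τ :=
    (continuous_iff_continuousAt.2 fun y => (hτ y).continuousAt).measurable
  exact lintegral_comp_shear_le (g := fun y => y - x * τ y) (h := fun y => k * (x * τ y)) hc
    (fun y => (hasDerivAt_id y).sub ((hτ y).const_mul x)) hcτ (by fun_prop) hF

theorem setLIntegral_comp_slide_le {k : ℝ} {τ τ' : ℝ → ℝ} {x c : ℝ} (hc : 0 < c)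
    (hτ : ∀ y, HasDerivAt τ (τ' y) y) (hcτ : ∀ y, c ≤ 1 - x * τ' y) {S T : Set (ℝ × ℝ)}
    (hS : MeasurableSet S) (hT : MeasurableSet T) (hST : MapsTo (slide k τ x) S T)
    {F : ℝ × ℝ → ENNReal} (hF : Measurable F) :
    ∫⁻ p in S, F (slide k τ x p) ≤ ENNReal.ofReal c⁻¹ * ∫⁻ p in T, F p := by
  rw [← lintegral_indicator hS, ← lintegral_indicator hT]
  refine (lintegral_mono fun p => ?_).trans
    (lintegral_comp_slide_le (k := k) hc hτ hcτ (hF.indicator hT))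
  by_cases hp : p ∈ S
  · simp [hp, hST hp]
  · simp [hp]

end ChangeOfVariables

section LIntegralBounds

variable {α : Type*} [MeasurableSpace α] {μ : Measure α}

theorem setLIntegral_ofReal_le_add {S : Set α} (hS : MeasurableSet S) {f g h : α → ℝ} {a b : ℝ}
    (ha : 0 ≤ a) (hb : 0 ≤ b) (hg : Measurable g) (hle : ∀ p ∈ S, f p ≤ a * g p + b * h p) :
    ∫⁻ p in S, ENNReal.ofReal (f p) ∂μ ≤
      ENNReal.ofReal a * ∫⁻ p in S, ENNReal.ofReal (g p) ∂μ +
        ENNReal.ofReal b * ∫⁻ p in S, ENNReal.ofReal (h p) ∂μ := by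
  rw [← lintegral_const_mul' _ _ ENNReal.ofReal_ne_top,
    ← lintegral_const_mul' _ _ ENNReal.ofReal_ne_top,
    ← lintegral_add_left (hg.ennreal_ofReal.const_mul _)]
  refine setLIntegral_mono' hS fun p hp => ?_
  rw [← ENNReal.ofReal_mul ha, ← ENNReal.ofReal_mul hb]
  exact (ENNReal.ofReal_le_ofReal (hle p hp)).trans ENNReal.ofReal_add_le

theorem lintegral_ofReal_intervalIntegral_le [SFinite μ] {f : ℝ → α → ℝ}
    (hf : Measurable (Function.uncurry f)) (hf_nonneg : ∀ x p, 0 ≤ f x p) {s t : ℝ} (hst : s ≤ t)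
    {C : ENNReal} (hC : ∀ x ∈ Icc s t, ∫⁻ p, ENNReal.ofReal (f x p) ∂μ ≤ C) :
    ∫⁻ p, ENNReal.ofReal (∫ x in s..t, f x p) ∂μ ≤ ENNReal.ofReal (t - s) * C :=
  calc ∫⁻ p, ENNReal.ofReal (∫ x in s..t, f x p) ∂μ
      ≤ ∫⁻ p, (∫⁻ x in Ioc s t, ENNReal.ofReal (f x p)) ∂μ := by
        refine lintegral_mono fun p => ?_
        rw [intervalIntegral.integral_of_le hst]
        refine (Real.ofReal_le_enorm _).trans ((enorm_integral_le_lintegral_enorm _).trans_eq ?_)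
        exact lintegral_congr fun x => Real.enorm_of_nonneg (hf_nonneg x p)
    _ = ∫⁻ x in Ioc s t, ∫⁻ p, ENNReal.ofReal (f x p) ∂μ :=
        lintegral_lintegral_swap (hf.comp measurable_swap).ennreal_ofReal.aemeasurable
    _ ≤ ∫⁻ _ in Ioc s t, C :=
        setLIntegral_mono measurable_const fun x hx => hC x (Ioc_subset_Icc_self hx)
    _ = ENNReal.ofReal (t - s) * C := by
        rw [setLIntegral_const, Real.volume_Ioc, mul_comm]

end LIntegralBounds

/-- The squared norm `∫_S |u|²`, with values in `[0, ∞]`. -/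
def l2Energy (u : ℝ × ℝ → ℝ × ℝ) (S : Set (ℝ × ℝ)) : ENNReal :=
  ∫⁻ p in S, ENNReal.ofReal (vsq (u p))

/-- The squared norm `∫_S (|u|² + |∇u|²)`, with values in `[0, ∞]`. -/
def h1Energy (u : ℝ × ℝ → ℝ × ℝ) (S : Set (ℝ × ℝ)) : ENNReal :=
  ∫⁻ p in S, ENNReal.ofReal (h1Density u p)

/-- The squared norm `∫_S |D(u)|²`, with values in `[0, ∞]`. -/
def strainEnergy (u : ℝ × ℝ → ℝ × ℝ) (S : Set (ℝ × ℝ)) : ENNReal :=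
  ∫⁻ p in S, ENNReal.ofReal (symmGradSq u p)

theorem setLIntegral_strain_slide_le {k : ℝ} {τ τ' : ℝ → ℝ} {s t c : ℝ} (hst : s ≤ t)
    (hc : 0 < c) (hτ : ∀ y, HasDerivAt τ (τ' y) y)
    (hcτ : ∀ x ∈ Icc s t, ∀ y, c ≤ 1 - x * τ' y) {S T : Set (ℝ × ℝ)} (hS : MeasurableSet S)
    (hT : MeasurableSet T) (hST : ∀ x ∈ Icc s t, MapsTo (slide k τ x) S T)
    {u : ℝ × ℝ → ℝ × ℝ} (hu : ContDiff ℝ 1 u) :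
    ∫⁻ p in S, ENNReal.ofReal (∫ x in s..t, symmGradSq u (slide k τ x p)) ≤
      ENNReal.ofReal (t - s) * (ENNReal.ofReal c⁻¹ * strainEnergy u T) := by
  have hτ_cont : Continuous τ := continuous_iff_continuousAt.2 fun y => (hτ y).continuousAt
  have hD := continuous_symmGradSq hu
  exact lintegral_ofReal_intervalIntegral_le (f := fun x p => symmGradSq u (slide k τ x p))
    (hD.comp (continuous_slide (k := k) hτ_cont)).measurable
    (fun _ _ => symmGradSq_nonneg _ _) hst fun x hx =>
      setLIntegral_comp_slide_le hc hτ (hcτ x hx) hS hT (hST x hx) hD.measurable.ennreal_ofReal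

theorem setLIntegral_dirComponent_sq_le {k : ℝ} {τ τ' : ℝ → ℝ} {t b c : ℝ} (ht : 0 ≤ t)
    (hc : 0 < c) (hτ : ∀ y, HasDerivAt τ (τ' y) y)
    (hcτ : ∀ x ∈ Icc 0 t, ∀ y, c ≤ 1 - x * τ' y) {S T T' : Set (ℝ × ℝ)} (hS : MeasurableSet S)
    (hT : MeasurableSet T) (hT' : MeasurableSet T') (hb : ∀ p ∈ S, |τ p.2| ≤ b)
    (hST : MapsTo (slide k τ t) S T) (hST' : ∀ x ∈ Icc 0 t, MapsTo (slide k τ x) S T')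
    {u : ℝ × ℝ → ℝ × ℝ} (hu : ContDiff ℝ 1 u) :
    ∫⁻ p in S, ENNReal.ofReal (dirComponent k (u p) ^ 2) ≤
      ENNReal.ofReal (2 * (k ^ 2 + 1)) * (ENNReal.ofReal c⁻¹ * l2Energy u T) +
        ENNReal.ofReal (2 * (t * ((k ^ 2 + 1) * b) ^ 2)) *
          (ENNReal.ofReal t * (ENNReal.ofReal c⁻¹ * strainEnergy u T')) := by
  have hτ_cont : Continuous τ := continuous_iff_continuousAt.2 fun y => (hτ y).continuousAt
  have hvsq : Continuous fun p => vsq (u p) := continuous_vsq.comp hu.continuous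
  have hend := setLIntegral_comp_slide_le (k := k) hc hτ (hcτ t (right_mem_Icc.2 ht)) hS hT hST
    hvsq.measurable.ennreal_ofReal
  have hpath := setLIntegral_strain_slide_le (k := k) ht hc hτ hcτ hS hT' hST' hu
  rw [sub_zero] at hpath
  refine (setLIntegral_ofReal_le_add hS (by positivity) (by positivity)
    (hvsq.comp (continuous_slide_right hτ_cont t)).measurable
    fun p hp => dirComponent_sq_le_vsq_slide_add_integral hu ht (hb p hp)).trans ?_
  gcongr
  exact hend

/-! ### Layers -/

section Layer

variable {ω : ℝ → ℝ} {M Y Z : ℝ}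

theorem measurableSet_layerRY (hω : Measurable ω) (Y : ℝ) : MeasurableSet (layerRY ω Y) :=
  (measurableSet_lt (hω.comp measurable_fst) measurable_snd).inter
    (measurableSet_lt measurable_snd measurable_const)

theorem layerRY_subset_layerRY (ω : ℝ → ℝ) (hYZ : Y ≤ Z) : layerRY ω Y ⊆ layerRY ω Z :=
  fun _ hp => ⟨hp.1, hp.2.trans_le hYZ⟩

theorem slide_mem_layerRY (hM : ∀ t, ω t ≤ M) {k x : ℝ} (hx : x < 1) {p : ℝ × ℝ}
    (hMp : M < p.2) (hp : p.2 < Y) :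
    slide k (fun y => y - M) x p ∈ layerRY ω (Y - x * (Y - M)) := by
  have hlow : 0 < (1 - x) * (p.2 - M) := mul_pos (sub_pos.2 hx) (sub_pos.2 hMp)
  have hhigh : 0 < (1 - x) * (Y - p.2) := mul_pos (sub_pos.2 hx) (sub_pos.2 hp)
  simp only [layerRY, slide, mem_ofPred_eq]
  exact ⟨(hM _).trans_lt (by linarith), by linarith⟩

theorem exists_setLIntegral_dirComponent_sq_le (hω : Measurable ω) (hM : ∀ t, ω t ≤ M)
    (hMZ : M < Z) (hZY : Z ≤ Y) (k : ℝ) :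
    ∃ C : NNReal, ∀ u : ℝ × ℝ → ℝ × ℝ, ContDiff ℝ 1 u →
      ∫⁻ p in layerRY ω Y ∩ {p | Z ≤ p.2}, ENNReal.ofReal (dirComponent k (u p) ^ 2) ≤
        C * (l2Energy u (layerRY ω Z) + strainEnergy u (layerRY ω Y)) := by
  set S := layerRY ω Y ∩ {p | Z ≤ p.2}
  have hS : MeasurableSet S :=
    (measurableSet_layerRY hω Y).inter (measurableSet_le measurable_const measurable_snd)
  have hMY : 0 < Y - M := by linarith
  let μ := (Y - Z) / (Y - M)
  have hμ_nonneg : 0 ≤ μ := div_nonneg (by linarith) hMY.le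
  have hμ_mul : μ * (Y - M) = Y - Z := div_mul_cancel₀ _ hMY.ne'
  have hμ_lt : 0 < 1 - μ := sub_pos.2 ((div_lt_one hMY).2 (by linarith))
  let τ : ℝ → ℝ := fun y => y - M
  have hτ : ∀ y, HasDerivAt τ 1 y := fun y => (hasDerivAt_id y).sub_const M
  have hslide : ∀ x ≤ μ, MapsTo (slide k τ x) S (layerRY ω (Y - x * (Y - M))) :=
    fun x hx p hp => slide_mem_layerRY hM (by linarith) (hMZ.trans_le hp.2) hp.1.2
  have hslide_path : ∀ x ∈ Icc 0 μ, MapsTo (slide k τ x) S (layerRY ω Y) := fun x hx =>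
    (hslide x hx.2).mono_right
      (layerRY_subset_layerRY ω (by linarith [mul_nonneg hx.1 hMY.le]))
  have hslide_end : MapsTo (slide k τ μ) S (layerRY ω Z) := by
    simpa only [hμ_mul, sub_sub_cancel] using hslide μ le_rfl
  have hb : ∀ p ∈ S, |τ p.2| ≤ Y - M := fun p hp =>
    (abs_of_nonneg (sub_nonneg.2 (hMZ.le.trans hp.2))).trans_le
      (sub_le_sub_right hp.1.2.le M)
  refine ⟨(2 * (k ^ 2 + 1)).toNNReal * (1 - μ)⁻¹.toNNReal +
    (2 * (μ * ((k ^ 2 + 1) * (Y - M)) ^ 2)).toNNReal * (μ.toNNReal * (1 - μ)⁻¹.toNNReal),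
    fun u hu => (setLIntegral_dirComponent_sq_le hμ_nonneg hμ_lt hτ
      (fun x hx _ => by linarith [hx.2]) hS (measurableSet_layerRY hω Z)
      (measurableSet_layerRY hω Y) hb hslide_end hslide_path hu).trans ?_⟩
  push_cast
  simp only [ENNReal.ofNNReal_toNNReal, add_mul, mul_assoc]
  gcongr
  exacts [le_self_add, le_add_self]

theorem exists_l2Energy_layerRY_le (hω : Measurable ω) (hM : ∀ t, ω t ≤ M)
    (hMZ : M < Z) (hZY : Z ≤ Y) :
    ∃ C : NNReal, ∀ u : ℝ × ℝ → ℝ × ℝ, ContDiff ℝ 1 u →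
      l2Energy u (layerRY ω Y) ≤
        C * (l2Energy u (layerRY ω Z) + strainEnergy u (layerRY ω Y)) := by
  obtain ⟨C₁, hC₁⟩ := exists_setLIntegral_dirComponent_sq_le hω hM hMZ hZY 1
  obtain ⟨C₂, hC₂⟩ := exists_setLIntegral_dirComponent_sq_le hω hM hMZ hZY (-1)
  refine ⟨1 + ((1 / 2 : ℝ).toNNReal * C₁ + (1 / 2 : ℝ).toNNReal * C₂), fun u hu => ?_⟩
  set S := layerRY ω Y ∩ {p | Z ≤ p.2}
  set E := l2Energy u (layerRY ω Z) + strainEnergy u (layerRY ω Y)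
  have hS : MeasurableSet S :=
    (measurableSet_layerRY hω Y).inter (measurableSet_le measurable_const measurable_snd)
  have hcover : layerRY ω Y ⊆ layerRY ω Z ∪ S := fun p hp =>
    (lt_or_ge p.2 Z).imp (fun h => ⟨hp.1, h⟩) fun h => ⟨hp, h⟩
  have hstrip : l2Energy u S ≤
      ENNReal.ofReal (1 / 2) * (C₁ * E) + ENNReal.ofReal (1 / 2) * (C₂ * E) := by
    refine (setLIntegral_ofReal_le_add hS (by positivity) (by positivity)
      (((dirComponent 1).continuous.comp hu.continuous).pow 2).measurable
      fun p _ => (vsq_eq_dirComponent_sq (u p)).le).trans ?_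
    gcongr
    exacts [hC₁ u hu, hC₂ u hu]
  calc l2Energy u (layerRY ω Y)
      ≤ l2Energy u (layerRY ω Z) + l2Energy u S :=
        (lintegral_mono_set hcover).trans (lintegral_union_le _ _ _)
    _ ≤ E + (ENNReal.ofReal (1 / 2) * (C₁ * E) + ENNReal.ofReal (1 / 2) * (C₂ * E)) :=
        add_le_add le_self_add hstrip
    _ = _ := by
        push_cast
        simp only [ENNReal.ofNNReal_toNNReal]
        ring

end Layer

section KornInequality

variable {ω : ℝ → ℝ} {Y : ℝ} {u : ℝ × ℝ → ℝ × ℝ} {S : Set (ℝ × ℝ)}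

theorem h1Energy_ne_top_iff_integrableOn (hu : ContDiff ℝ 1 u) :
    h1Energy u S ≠ ⊤ ↔ IntegrableOn (h1Density u) S :=
  lintegral_ofReal_ne_top_iff_integrable (continuous_h1Density hu).aestronglyMeasurable
    (Eventually.of_forall (h1Density_nonneg u))

theorem ofReal_setIntegral_eq_of_le_h1Density {f : ℝ × ℝ → ℝ} (hf : Continuous f)
    (hf_nonneg : ∀ p, 0 ≤ f p) (hfu : ∀ p, f p ≤ h1Density u p)
    (hu_int : IntegrableOn (h1Density u) S) :
    ENNReal.ofReal (∫ p in S, f p) = ∫⁻ p in S, ENNReal.ofReal (f p) :=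
  ofReal_integral_eq_lintegral_ofReal
    (hu_int.mono' hf.aestronglyMeasurable (Eventually.of_forall fun p =>
      (Real.norm_of_nonneg (hf_nonneg p)).trans_le (hfu p)))
    (Eventually.of_forall hf_nonneg)

theorem ofReal_setIntegral_vsq (hu : ContDiff ℝ 1 u) (hu_int : IntegrableOn (h1Density u) S) :
    ENNReal.ofReal (∫ p in S, vsq (u p)) = l2Energy u S :=
  ofReal_setIntegral_eq_of_le_h1Density (continuous_vsq.comp hu.continuous)
    (fun _ => vsq_nonneg _) (fun _ => le_add_of_nonneg_right (gradSq_nonneg _ _)) hu_int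

theorem ofReal_setIntegral_symmGradSq (hu : ContDiff ℝ 1 u)
    (hu_int : IntegrableOn (h1Density u) S) :
    ENNReal.ofReal (∫ p in S, symmGradSq u p) = strainEnergy u S :=
  ofReal_setIntegral_eq_of_le_h1Density (continuous_symmGradSq hu) (symmGradSq_nonneg u)
    (fun p => (symmGradSq_le_gradSq u p).trans (le_add_of_nonneg_left (vsq_nonneg _))) hu_int

/-- Property `(K_Y)` with the integrals taken in `[0, ∞]`, where they need no integrability side
conditions. -/
def LIntegralKornProp (ω : ℝ → ℝ) (Y : ℝ) : Prop :=
  ∃ C : NNReal, ∀ u : ℝ × ℝ → ℝ × ℝ, ContDiff ℝ (⊤ : ℕ∞) u →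
    h1Energy u (layerRY ω Y) ≠ ⊤ → TangentOn ω u →
      l2Energy u (layerRY ω Y) ≤ C * strainEnergy u (layerRY ω Y)

theorem kornProp_iff_lintegralKornProp : KornProp ω Y ↔ LIntegralKornProp ω Y := by
  constructor
  · rintro ⟨C, hC, hkorn⟩
    refine ⟨C.toNNReal, fun u hu hfin htan => ?_⟩
    have hu' : ContDiff ℝ 1 u := hu.of_le (mod_cast le_top)
    have hint := (h1Energy_ne_top_iff_integrableOn hu').1 hfin
    rw [← ofReal_setIntegral_vsq hu' hint, ← ofReal_setIntegral_symmGradSq hu' hint]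
    exact (ENNReal.ofReal_le_ofReal (hkorn u hu hint htan)).trans_eq (ENNReal.ofReal_mul hC.le)
  · rintro ⟨C, hkorn⟩
    refine ⟨C + 1, by positivity, fun u hu hint htan => ?_⟩
    have hu' : ContDiff ℝ 1 u := hu.of_le (mod_cast le_top)
    have hstrain : 0 ≤ ∫ p in layerRY ω Y, symmGradSq u p :=
      integral_nonneg (symmGradSq_nonneg u)
    have hle := hkorn u hu ((h1Energy_ne_top_iff_integrableOn hu').2 hint) htan
    rw [← ofReal_setIntegral_vsq hu' hint, ← ofReal_setIntegral_symmGradSq hu' hint,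
      ← ENNReal.ofReal_coe_nnreal, ← ENNReal.ofReal_mul C.coe_nonneg,
      ENNReal.ofReal_le_ofReal_iff (by positivity)] at hle
    exact hle.trans (mul_le_mul_of_nonneg_right (le_add_of_nonneg_right zero_le_one) hstrain)

end KornInequality

/-! ### Ramps -/

/-- The ramps used to compress layers vertically: `η` is smooth and nondecreasing, vanishes below
`a`, and for every `x ∈ [1, t]` the map `y ↦ y - x η(y)` has slope at least `c` and sends
`(-∞, Z)` into `(-∞, Y)`. -/
structure IsRamp (a Y Z t c : ℝ) (η : ℝ → ℝ) : Prop where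
  contDiff : ContDiff ℝ (⊤ : ℕ∞) η
  one_lt : 1 < t
  pos : 0 < c
  deriv_nonneg : ∀ y, 0 ≤ deriv η y
  mul_deriv_le : ∀ y, t * deriv η y ≤ 1 - c
  eq_zero : ∀ y ≤ a, η y = 0
  le_apply : Z - Y ≤ η Z

theorem exists_contDiff_ramp {a b θ : ℝ} (hab : a < b) (hθ : 0 ≤ θ) :
    ∃ η : ℝ → ℝ, ContDiff ℝ (⊤ : ℕ∞) η ∧ (∀ y, 0 ≤ deriv η y ∧ deriv η y ≤ θ) ∧
      (∀ y ≤ a, η y = 0) ∧ ∀ y ≥ b, θ * (y - b) ≤ η y := by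
  let ρ : ℝ → ℝ := fun x => θ * smoothTransition ((x - a) / (b - a))
  have hba : 0 < b - a := sub_pos.2 hab
  have hρ : ContDiff ℝ (⊤ : ℕ∞) ρ :=
    contDiff_const.mul (smoothTransition.contDiff.comp
      ((contDiff_id.sub contDiff_const).div_const _))
  have hρ_int : ∀ x y, IntervalIntegrable ρ volume x y := hρ.continuous.intervalIntegrable
  have hρ_nonneg : ∀ x, 0 ≤ ρ x := fun x => mul_nonneg hθ (smoothTransition.nonneg _)
  have hρ_zero : ∀ x ≤ a, ρ x = 0 := fun x hx =>
    mul_eq_zero_of_right θ (smoothTransition.zero_of_nonpos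
      (div_nonpos_of_nonpos_of_nonneg (sub_nonpos.2 hx) hba.le))
  have hρ_const : ∀ x ≥ b, ρ x = θ := fun x hx =>
    (congrArg (θ * ·) (smoothTransition.one_of_one_le
      ((one_le_div hba).2 (sub_le_sub_right hx a)))).trans (mul_one θ)
  let η : ℝ → ℝ := fun y => ∫ x in a..y, ρ x
  have hη : ∀ y, HasDerivAt η (ρ y) y := fun y =>
    (hρ.continuous.integral_hasStrictDerivAt a y).hasDerivAt
  have hη_deriv : deriv η = ρ := funext fun y => (hη y).deriv
  refine ⟨η, contDiff_infty_iff_deriv.2 ⟨fun y => (hη y).differentiableAt, hη_deriv ▸ hρ⟩,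
    fun y => ?_, fun y hy => ?_, fun y hy => ?_⟩
  · rw [hη_deriv]
    exact ⟨hρ_nonneg y, mul_le_of_le_one_right hθ (smoothTransition.le_one _)⟩
  · have hzero : EqOn ρ (fun _ => 0) (uIcc a y) := fun x hx =>
      hρ_zero x (uIcc_of_ge hy ▸ hx).2
    simp only [η, intervalIntegral.integral_congr hzero, intervalIntegral.integral_zero]
  · have hconst : EqOn ρ (fun _ => θ) (uIcc b y) := fun x hx =>
      hρ_const x (uIcc_of_le hy ▸ hx).1
    calc θ * (y - b)
        = ∫ x in b..y, ρ x := by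
          rw [intervalIntegral.integral_congr hconst, intervalIntegral.integral_const,
            smul_eq_mul, mul_comm]
      _ ≤ (∫ x in a..b, ρ x) + ∫ x in b..y, ρ x :=
          le_add_of_nonneg_left (intervalIntegral.integral_nonneg hab.le fun x _ => hρ_nonneg x)
      _ = η y := intervalIntegral.integral_add_adjacent_intervals (hρ_int a b) (hρ_int b y)

theorem exists_isRamp {a Y Z : ℝ} (haY : a < Y) (hYZ : Y < Z) : ∃ t c η, IsRamp a Y Z t c η := by
  obtain ⟨b, hab, hbY⟩ := exists_between haY
  have hbZ : 0 < Z - b := by linarith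
  let θ := (Z - Y) / (Z - b)
  have hθ_pos : 0 < θ := div_pos (sub_pos.2 hYZ) hbZ
  have hθ_lt : θ < 1 := (div_lt_one hbZ).2 (by linarith)
  obtain ⟨η, hη, hη_deriv, hη_zero, hη_le⟩ := exists_contDiff_ramp hab hθ_pos.le
  obtain ⟨t, ht, htθ⟩ := exists_between ((one_lt_div hθ_pos).2 hθ_lt)
  refine ⟨t, 1 - t * θ, η, hη, ht, sub_pos.2 ((lt_div_iff₀ hθ_pos).1 htθ),
    fun y => (hη_deriv y).1, fun y => ?_, hη_zero, ?_⟩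
  · rw [sub_sub_cancel]
    exact mul_le_mul_of_nonneg_left (hη_deriv y).2 (by linarith)
  · simpa only [θ, div_mul_cancel₀ _ hbZ.ne'] using hη_le Z (by linarith)

namespace IsRamp

variable {a Y Z t c x y : ℝ} {η ω : ℝ → ℝ}

theorem hasDerivAt (h : IsRamp a Y Z t c η) (y : ℝ) : HasDerivAt η (deriv η y) y :=
  (h.contDiff.differentiable (by simp) y).hasDerivAt

theorem contDiff_deriv (h : IsRamp a Y Z t c η) : ContDiff ℝ (⊤ : ℕ∞) (deriv η) :=
  (contDiff_infty_iff_deriv.1 h.contDiff).2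

theorem le_one_sub_mul_deriv (h : IsRamp a Y Z t c η) (hx : x ∈ Icc 1 t) (y : ℝ) :
    c ≤ 1 - x * deriv η y := by
  linarith [h.mul_deriv_le y, mul_le_mul_of_nonneg_right hx.2 (h.deriv_nonneg y)]

theorem abs_one_sub_mul_deriv_le (h : IsRamp a Y Z t c η) (hx : x ∈ Icc 1 t) (y : ℝ) :
    |1 - x * deriv η y| ≤ 1 := by
  rw [abs_of_pos (h.pos.trans_le (h.le_one_sub_mul_deriv hx y))]
  exact sub_le_self _ (mul_nonneg (zero_le_one.trans hx.1) (h.deriv_nonneg y))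

theorem monotone (h : IsRamp a Y Z t c η) : Monotone η :=
  monotone_of_hasDerivAt_nonneg h.hasDerivAt h.deriv_nonneg

theorem nonneg (h : IsRamp a Y Z t c η) (y : ℝ) : 0 ≤ η y := by
  rcases le_total y a with hy | hy
  · exact (h.eq_zero y hy).ge
  · exact (h.eq_zero a le_rfl).ge.trans (h.monotone hy)

theorem strictMono_sub (h : IsRamp a Y Z t c η) (hx : x ∈ Icc 1 t) :
    StrictMono fun y => y - x * η y :=
  strictMono_of_hasDerivAt_pos (fun y => (hasDerivAt_id y).sub ((h.hasDerivAt y).const_mul x))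
    fun y => h.pos.trans_le (h.le_one_sub_mul_deriv hx y)

theorem mapsTo_slide (h : IsRamp a Y Z t c η) (hω : ∀ s, ω s ≤ a) (hx : x ∈ Icc 1 t) :
    MapsTo (slide 0 η x) (layerRY ω Z) (layerRY ω Y) := by
  rintro p ⟨hωp, hpZ⟩
  simp only [layerRY, slide, zero_mul, sub_zero, mem_ofPred_eq]
  constructor
  · rcases le_or_gt p.2 a with hp | hp
    · rwa [h.eq_zero _ hp, mul_zero, sub_zero]
    · have := h.strictMono_sub hx hp
      simp only [h.eq_zero a le_rfl, mul_zero, sub_zero] at this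
      exact (hω p.1).trans_lt this
  · calc p.2 - x * η p.2 < Z - x * η Z := h.strictMono_sub hx hpZ
      _ ≤ Z - η Z := sub_le_sub_left (le_mul_of_one_le_left (h.nonneg Z) hx.1) Z
      _ ≤ Y := sub_le_comm.1 h.le_apply

theorem deriv_eq_zero (h : IsRamp a Y Z t c η) (hy : y < a) : deriv η y = 0 := by
  have hη : η =ᶠ[nhds y] fun _ => 0 := by
    filter_upwards [Iio_mem_nhds hy] with z hz using h.eq_zero z (le_of_lt hz)
  rw [hη.deriv_eq, deriv_const]

theorem exists_sq_deriv_deriv_le (h : IsRamp a Y Z t c η) :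
    ∃ B, ∀ y ≤ Z, deriv (deriv η) y ^ 2 ≤ B := by
  have hcont : Continuous (deriv (deriv η)) := h.contDiff_deriv.continuous_deriv (by simp)
  obtain ⟨B, hB⟩ := isCompact_Icc.bddAbove_image (K := Icc a Z) (hcont.pow 2).continuousOn
  refine ⟨max B 0, fun y hy => ?_⟩
  rcases lt_or_ge y a with hya | hya
  · have hη : deriv η =ᶠ[nhds y] fun _ => 0 := by
      filter_upwards [Iio_mem_nhds hya] with z hz using h.deriv_eq_zero hz
    rw [hη.deriv_eq, deriv_const, zero_pow two_ne_zero]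
    exact le_max_right _ _
  · exact (hB (mem_image_of_mem _ ⟨hya, hy⟩)).trans (le_max_left _ _)

end IsRamp

/-! ### The Nitsche extension -/

/-- The pullback of `u`, regarded as a covector field, under the vertical slide `slide 0 η x`. -/
def slidePullback (η : ℝ → ℝ) (x : ℝ) (u : ℝ × ℝ → ℝ × ℝ) (p : ℝ × ℝ) : ℝ × ℝ :=
  ((u (slide 0 η x p)).1, (1 - x * deriv η p.2) * (u (slide 0 η x p)).2)

/-- The smooth Nitsche-type extension `(t • Φ₁^*u - Φₜ^*u) / (t - 1)`, where `Φₓ` is the vertical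
slide by `x η`. -/
def nitscheExtension (η : ℝ → ℝ) (t : ℝ) (u : ℝ × ℝ → ℝ × ℝ) : ℝ × ℝ → ℝ × ℝ :=
  (t / (t - 1)) • slidePullback η 1 u - (1 / (t - 1)) • slidePullback η t u

section SlidePullback

variable {η : ℝ → ℝ} {u : ℝ × ℝ → ℝ × ℝ}

theorem contDiff_slidePullback (hη : ContDiff ℝ (⊤ : ℕ∞) η) {n : ℕ∞} (hu : ContDiff ℝ n u)
    (x : ℝ) : ContDiff ℝ n (slidePullback η x u) := by
  have hη' : ContDiff ℝ n η := hη.of_le (mod_cast le_top)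
  have hη'' : ContDiff ℝ n (deriv η) :=
    (contDiff_infty_iff_deriv.1 hη).2.of_le (mod_cast le_top)
  unfold slidePullback slide
  fun_prop

theorem fderiv_slidePullback_apply (hη : ContDiff ℝ (⊤ : ℕ∞) η) (hu : ContDiff ℝ 1 u)
    (x : ℝ) (p e : ℝ × ℝ) :
    fderiv ℝ (slidePullback η x u) p e =
      ((fderiv ℝ u (slide 0 η x p) (e.1, (1 - x * deriv η p.2) * e.2)).1,
        (1 - x * deriv η p.2) *
          (fderiv ℝ u (slide 0 η x p) (e.1, (1 - x * deriv η p.2) * e.2)).2 -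
            x * deriv (deriv η) p.2 * e.2 * (u (slide 0 η x p)).2) := by
  have hη' := (contDiff_infty_iff_deriv.1 hη).2
  have hηp := (hη.differentiable (by simp) p.2).hasDerivAt.comp_hasFDerivAt p
    (hasFDerivAt_snd (𝕜 := ℝ) (p := p))
  have hηp' := (hη'.differentiable (by simp) p.2).hasDerivAt.comp_hasFDerivAt p
    (hasFDerivAt_snd (𝕜 := ℝ) (p := p))
  have hm := (hηp'.const_mul x).const_sub 1
  have hslide : HasFDerivAt (slide 0 η x) _ p :=
    (hasFDerivAt_fst.sub ((hηp.const_mul x).const_mul 0)).prodMk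
      (hasFDerivAt_snd.sub (hηp.const_mul x))
  have hcomp := (hu.differentiable one_ne_zero _).hasFDerivAt.comp p hslide
  have hpull : HasFDerivAt (slidePullback η x u) _ p := hcomp.fst.prodMk (hm.mul hcomp.snd)
  have he : ((e.1, e.2 - x * (deriv η p.2 * e.2)) : ℝ × ℝ) =
      (e.1, (1 - x * deriv η p.2) * e.2) := by
    ext <;> simp only
    ring
  rw [hpull.fderiv]
  ext <;> simp only [zero_smul, sub_zero, Function.comp_apply, smul_neg,
    ContinuousLinearMap.prod_apply, ContinuousLinearMap.comp_apply, ContinuousLinearMap.coe_fst',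
    ContinuousLinearMap.coe_snd', sub_apply, smul_apply, add_apply, neg_apply, smul_eq_mul, he]
  ring

theorem fderiv_slidePullback_fst (hη : ContDiff ℝ (⊤ : ℕ∞) η) (hu : ContDiff ℝ 1 u)
    (x : ℝ) (p : ℝ × ℝ) :
    fderiv ℝ (slidePullback η x u) p (1, 0) =
      ((fderiv ℝ u (slide 0 η x p) (1, 0)).1,
        (1 - x * deriv η p.2) * (fderiv ℝ u (slide 0 η x p) (1, 0)).2) := by
  simp [fderiv_slidePullback_apply hη hu]

theorem fderiv_slidePullback_snd (hη : ContDiff ℝ (⊤ : ℕ∞) η) (hu : ContDiff ℝ 1 u)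
    (x : ℝ) (p : ℝ × ℝ) :
    fderiv ℝ (slidePullback η x u) p (0, 1) =
      ((1 - x * deriv η p.2) * (fderiv ℝ u (slide 0 η x p) (0, 1)).1,
        (1 - x * deriv η p.2) ^ 2 * (fderiv ℝ u (slide 0 η x p) (0, 1)).2) -
      (0, x * deriv (deriv η) p.2 * (u (slide 0 η x p)).2) := by
  have he : ((0, 1 - x * deriv η p.2) : ℝ × ℝ) = (1 - x * deriv η p.2) • (0, 1) := by simp
  rw [fderiv_slidePullback_apply hη hu]
  simp only [mul_one, he, map_smul, Prod.smul_fst, Prod.smul_snd, smul_eq_mul, Prod.mk_sub_mk,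
    sub_zero]
  ring_nf

theorem h1Density_slidePullback_le (hη : ContDiff ℝ (⊤ : ℕ∞) η) (hu : ContDiff ℝ 1 u)
    {x : ℝ} {p : ℝ × ℝ} (hm : |1 - x * deriv η p.2| ≤ 1) :
    h1Density (slidePullback η x u) p ≤
      (2 + 2 * (x * deriv (deriv η) p.2) ^ 2) * h1Density u (slide 0 η x p) := by
  set m := 1 - x * deriv η p.2
  set K := x * deriv (deriv η) p.2
  set w := u (slide 0 η x p)
  set w₁ := fderiv ℝ u (slide 0 η x p) (1, 0)
  set w₂ := fderiv ℝ u (slide 0 η x p) (0, 1)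
  have hm2 : |m ^ 2| ≤ 1 := (abs_pow m 2).trans_le (pow_le_one₀ (abs_nonneg m) hm)
  have hfun : vsq (slidePullback η x u p) ≤ vsq w := by
    simpa only [one_mul, slidePullback] using vsq_mul_le abs_one.le hm w
  have hfst : vsq (w₁.1, m * w₁.2) ≤ vsq w₁ := by
    simpa only [one_mul] using vsq_mul_le abs_one.le hm w₁
  have hsnd := vsq_sub_le (m * w₂.1, m ^ 2 * w₂.2) (0, K * w.2)
  have hsnd' : vsq (m * w₂.1, m ^ 2 * w₂.2) ≤ vsq w₂ := vsq_mul_le hm hm2 w₂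
  have hlow : vsq (0, K * w.2) ≤ K ^ 2 * vsq w := by
    simp only [vsq]
    nlinarith [mul_nonneg (sq_nonneg K) (sq_nonneg w.1)]
  simp only [h1Density, gradSq, fderiv_slidePullback_fst hη hu, fderiv_slidePullback_snd hη hu]
  linarith [vsq_nonneg w, vsq_nonneg w₁, mul_nonneg (sq_nonneg K) (vsq_nonneg w₁),
    mul_nonneg (sq_nonneg K) (vsq_nonneg w₂)]

theorem symmGradSq_nitscheExtension_le (hη : ContDiff ℝ (⊤ : ℕ∞) η) (hu : ContDiff ℝ 1 u)
    {t : ℝ} {p : ℝ × ℝ} (h1 : |1 - 1 * deriv η p.2| ≤ 1) (ht : |1 - t * deriv η p.2| ≤ 1) :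
    symmGradSq (nitscheExtension η t u) p ≤
      4 * (t / (t - 1)) ^ 2 * symmGradSq u (slide 0 η 1 p) +
      4 * (1 / (t - 1)) ^ 2 * symmGradSq u (slide 0 η t p) +
      2 * (t / (t - 1) * deriv (deriv η) p.2) ^ 2 *
        ((u (slide 0 η t p)).2 - (u (slide 0 η 1 p)).2) ^ 2 := by
  set q := t / (t - 1)
  set r := 1 / (t - 1)
  have hrt : r * t = q := by simp only [q, r]; ring
  have hd : ∀ x, DifferentiableAt ℝ (slidePullback η x u) p := fun x =>
    (contDiff_slidePullback hη (n := 1) hu x).differentiable one_ne_zero p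
  let V : ℝ → ℝ × ℝ := fun x =>
    ((fderiv ℝ u (slide 0 η x p) (1, 0)).1,
      (1 - x * deriv η p.2) * (fderiv ℝ u (slide 0 η x p) (1, 0)).2)
  let W : ℝ → ℝ × ℝ := fun x =>
    ((1 - x * deriv η p.2) * (fderiv ℝ u (slide 0 η x p) (0, 1)).1,
      (1 - x * deriv η p.2) ^ 2 * (fderiv ℝ u (slide 0 η x p) (0, 1)).2)
  let e := q * deriv (deriv η) p.2 * ((u (slide 0 η 1 p)).2 - (u (slide 0 η t p)).2)
  have hfst : fderiv ℝ (nitscheExtension η t u) p (1, 0) = q • V 1 - r • V t := by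
    rw [nitscheExtension, fderiv_smul_sub_smul_apply (hd 1) (hd t),
      fderiv_slidePullback_fst hη hu, fderiv_slidePullback_fst hη hu]
  -- `r t = q` cancels the second derivative of `η` up to a difference of values of `u`.
  have hsnd : fderiv ℝ (nitscheExtension η t u) p (0, 1) = q • W 1 - r • W t - (0, e) := by
    rw [nitscheExtension, fderiv_smul_sub_smul_apply (hd 1) (hd t),
      fderiv_slidePullback_snd hη hu, fderiv_slidePullback_snd hη hu]
    ext
    · simp only [W, q, r, Prod.fst_sub, Prod.smul_fst, sub_zero]
    · simp only [W, e, Prod.snd_sub, Prod.smul_snd, smul_eq_mul]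
      linear_combination (deriv (deriv η) p.2 * (u (slide 0 η t p)).2) * hrt
  have hle := strainSq_smul_sub_smul_sub_snd_le q r e (V 1) (W 1) (V t) (W t)
  rw [← hfst, ← hsnd] at hle
  calc symmGradSq (nitscheExtension η t u) p
      ≤ 4 * q ^ 2 * strainSq (V 1) (W 1) + 4 * r ^ 2 * strainSq (V t) (W t) + 2 * e ^ 2 := hle
    _ ≤ 4 * q ^ 2 * symmGradSq u (slide 0 η 1 p) + 4 * r ^ 2 * symmGradSq u (slide 0 η t p) +
          2 * e ^ 2 := by
        gcongr
        exacts [strainSq_rescale_le h1 _ _, strainSq_rescale_le ht _ _]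
    _ = _ := by
        simp only [e]
        ring

end SlidePullback

theorem h1Energy_smul_sub_smul_ne_top {v w : ℝ × ℝ → ℝ × ℝ} {S : Set (ℝ × ℝ)}
    (hS : MeasurableSet S) (hv : ContDiff ℝ 1 v) (hw : ContDiff ℝ 1 w)
    (hv_fin : h1Energy v S ≠ ⊤) (hw_fin : h1Energy w S ≠ ⊤) (q r : ℝ) :
    h1Energy (q • v - r • w) S ≠ ⊤ :=
  ne_top_of_le_ne_top
    (ENNReal.add_ne_top.2 ⟨ENNReal.mul_ne_top ENNReal.ofReal_ne_top hv_fin,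
      ENNReal.mul_ne_top ENNReal.ofReal_ne_top hw_fin⟩)
    (setLIntegral_ofReal_le_add hS (by positivity) (by positivity)
      (continuous_h1Density hv).measurable fun p _ =>
        h1Density_smul_sub_smul_le (hv.differentiable one_ne_zero p)
          (hw.differentiable one_ne_zero p) q r)

namespace IsRamp

variable {a Y Z t c x : ℝ} {η ω : ℝ → ℝ} {u : ℝ × ℝ → ℝ × ℝ}

theorem contDiff_nitscheExtension (h : IsRamp a Y Z t c η) {n : ℕ∞} (hu : ContDiff ℝ n u) :
    ContDiff ℝ n (nitscheExtension η t u) := by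
  have hpull := contDiff_slidePullback h.contDiff hu
  exact (contDiff_const.smul (hpull 1)).sub (contDiff_const.smul (hpull t))

theorem nitscheExtension_eq (h : IsRamp a Y Z t c η) (u : ℝ × ℝ → ℝ × ℝ) {p : ℝ × ℝ}
    (hp : p.2 < a) : nitscheExtension η t u p = u p := by
  have hpull : ∀ x, slidePullback η x u p = u p := fun x => by
    simp [slidePullback, slide, h.eq_zero p.2 hp.le, h.deriv_eq_zero hp]
  have hcoeff : t / (t - 1) - 1 / (t - 1) = 1 := by
    rw [← sub_div, div_self (sub_pos.2 h.one_lt).ne']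
  simp only [nitscheExtension, Pi.sub_apply, Pi.smul_apply, hpull, ← sub_smul, hcoeff, one_smul]

theorem setLIntegral_comp_slide_le (h : IsRamp a Y Z t c η) (hω : Measurable ω)
    (hωa : ∀ s, ω s ≤ a) (hx : x ∈ Icc 1 t) {F : ℝ × ℝ → ENNReal} (hF : Measurable F) :
    ∫⁻ p in layerRY ω Z, F (slide 0 η x p) ≤
      ENNReal.ofReal c⁻¹ * ∫⁻ p in layerRY ω Y, F p :=
  _root_.setLIntegral_comp_slide_le h.pos h.hasDerivAt (h.le_one_sub_mul_deriv hx)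
    (measurableSet_layerRY hω Z) (measurableSet_layerRY hω Y) (h.mapsTo_slide hωa hx) hF

theorem h1Energy_slidePullback_ne_top (h : IsRamp a Y Z t c η) (hω : Measurable ω)
    (hωa : ∀ s, ω s ≤ a) (hx : x ∈ Icc 1 t) (hu : ContDiff ℝ 1 u)
    (hu_fin : h1Energy u (layerRY ω Y) ≠ ⊤) :
    h1Energy (slidePullback η x u) (layerRY ω Z) ≠ ⊤ := by
  obtain ⟨B, hB⟩ := h.exists_sq_deriv_deriv_le
  have hpt : ∀ p ∈ layerRY ω Z, ENNReal.ofReal (h1Density (slidePullback η x u) p) ≤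
      ENNReal.ofReal (2 + 2 * (x ^ 2 * B)) *
        ENNReal.ofReal (h1Density u (slide 0 η x p)) := fun p hp => by
    rw [← ENNReal.ofReal_mul' (h1Density_nonneg _ _)]
    refine ENNReal.ofReal_le_ofReal ((h1Density_slidePullback_le h.contDiff hu
      (h.abs_one_sub_mul_deriv_le hx p.2)).trans ?_)
    rw [mul_pow]
    gcongr
    exacts [h1Density_nonneg _ _, hB p.2 hp.2.le]
  refine ne_top_of_le_ne_top ?_ (setLIntegral_mono' (measurableSet_layerRY hω Z) hpt)
  rw [lintegral_const_mul' _ _ ENNReal.ofReal_ne_top]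
  exact ENNReal.mul_ne_top ENNReal.ofReal_ne_top
    (ne_top_of_le_ne_top (ENNReal.mul_ne_top ENNReal.ofReal_ne_top hu_fin)
      (h.setLIntegral_comp_slide_le hω hωa hx
        (continuous_h1Density hu).measurable.ennreal_ofReal))

theorem sq_snd_slide_sub_le (h : IsRamp a Y Z t c η) (hu : ContDiff ℝ 1 u) {p : ℝ × ℝ}
    (hp : p.2 ≤ Z) :
    ((u (slide 0 η t p)).2 - (u (slide 0 η 1 p)).2) ^ 2 ≤
      (t - 1) * η Z ^ 2 * ∫ x in 1..t, symmGradSq u (slide 0 η x p) := by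
  have hle := sq_dirComponent_slide_sub_le (k := 0) (τ := η) hu h.one_lt.le p
  simp only [dirComponent_apply, zero_mul, zero_add, zero_pow two_ne_zero, one_mul] at hle
  have hηp : η p.2 ^ 2 ≤ η Z ^ 2 := pow_le_pow_left₀ (h.nonneg _) (h.monotone hp) 2
  have hint : 0 ≤ ∫ x in 1..t, symmGradSq u (slide 0 η x p) :=
    intervalIntegral.integral_nonneg h.one_lt.le fun _ _ => symmGradSq_nonneg _ _
  rw [mul_assoc]
  exact hle.trans (mul_le_mul_of_nonneg_left (mul_le_mul_of_nonneg_right hηp hint)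
    (sub_nonneg.2 h.one_lt.le))

theorem symmGradSq_nitscheExtension_le_integral (h : IsRamp a Y Z t c η) (hu : ContDiff ℝ 1 u)
    {p : ℝ × ℝ} (hp : p.2 ≤ Z) {B : ℝ} (hB : deriv (deriv η) p.2 ^ 2 ≤ B) :
    symmGradSq (nitscheExtension η t u) p ≤
      4 * (t / (t - 1)) ^ 2 * symmGradSq u (slide 0 η 1 p) +
      4 * (1 / (t - 1)) ^ 2 * symmGradSq u (slide 0 η t p) +
      2 * ((t / (t - 1)) ^ 2 * B) * ((t - 1) * η Z ^ 2) *
        ∫ x in 1..t, symmGradSq u (slide 0 η x p) := by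
  have hB_nonneg : 0 ≤ B := (sq_nonneg _).trans hB
  refine (symmGradSq_nitscheExtension_le h.contDiff hu
    (h.abs_one_sub_mul_deriv_le (left_mem_Icc.2 h.one_lt.le) p.2)
    (h.abs_one_sub_mul_deriv_le (right_mem_Icc.2 h.one_lt.le) p.2)).trans ?_
  rw [mul_pow _ (deriv (deriv η) p.2), mul_assoc (2 * _) ((t - 1) * η Z ^ 2)]
  gcongr
  exact h.sq_snd_slide_sub_le hu hp

theorem exists_strainEnergy_nitscheExtension_le (h : IsRamp a Y Z t c η) (hω : Measurable ω)
    (hωa : ∀ s, ω s ≤ a) :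
    ∃ C : NNReal, ∀ u : ℝ × ℝ → ℝ × ℝ, ContDiff ℝ 1 u →
      strainEnergy (nitscheExtension η t u) (layerRY ω Z) ≤ C * strainEnergy u (layerRY ω Y) := by
  obtain ⟨B, hB⟩ := h.exists_sq_deriv_deriv_le
  have hB_nonneg : 0 ≤ B := (sq_nonneg _).trans (hB Z le_rfl)
  have ht : 0 ≤ t - 1 := sub_nonneg.2 h.one_lt.le
  have h1_mem : (1 : ℝ) ∈ Icc 1 t := left_mem_Icc.2 h.one_lt.le
  have ht_mem : t ∈ Icc 1 t := right_mem_Icc.2 h.one_lt.le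
  have hZ := measurableSet_layerRY hω Z
  let α := 4 * (t / (t - 1)) ^ 2
  let β := 4 * (1 / (t - 1)) ^ 2
  let γ := 2 * ((t / (t - 1)) ^ 2 * B) * ((t - 1) * η Z ^ 2)
  refine ⟨(α.toNNReal + (β.toNNReal + γ.toNNReal * (t - 1).toNNReal)) * c⁻¹.toNNReal,
    fun u hu => ?_⟩
  have hpt : ∀ p ∈ layerRY ω Z, symmGradSq (nitscheExtension η t u) p ≤
      α * symmGradSq u (slide 0 η 1 p) + 1 * (β * symmGradSq u (slide 0 η t p) +
        γ * ∫ x in 1..t, symmGradSq u (slide 0 η x p)) := fun p hp => by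
    rw [one_mul, ← add_assoc]
    exact h.symmGradSq_nitscheExtension_le_integral hu hp.2.le (hB p.2 hp.2.le)
  have hD := continuous_symmGradSq hu
  have hD_slide : ∀ x, Measurable fun p => symmGradSq u (slide 0 η x p) := fun x =>
    (hD.comp (continuous_slide_right h.contDiff.continuous x)).measurable
  have hD_le : ∀ x ∈ Icc 1 t, ∫⁻ p in layerRY ω Z, ENNReal.ofReal (symmGradSq u (slide 0 η x p)) ≤
      ENNReal.ofReal c⁻¹ * strainEnergy u (layerRY ω Y) := fun x hx =>
    h.setLIntegral_comp_slide_le hω hωa hx hD.measurable.ennreal_ofReal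
  have hpath := setLIntegral_strain_slide_le h.one_lt.le h.pos h.hasDerivAt
    (fun x hx => h.le_one_sub_mul_deriv hx) hZ (measurableSet_layerRY hω Y)
    (fun x hx => h.mapsTo_slide hωa hx) hu
  calc strainEnergy (nitscheExtension η t u) (layerRY ω Z)
      ≤ _ := setLIntegral_ofReal_le_add hZ (by positivity) zero_le_one (hD_slide 1) hpt
    _ ≤ _ := by
      grw [setLIntegral_ofReal_le_add hZ (by positivity) (by positivity) (hD_slide t)
        (fun _ _ => le_rfl), hD_le 1 h1_mem, hD_le t ht_mem, hpath]
    _ = _ := by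
      push_cast
      simp only [ENNReal.ofNNReal_toNNReal, ENNReal.ofReal_one]
      ring

end IsRamp

theorem exists_extension_strainEnergy_le {ω : ℝ → ℝ} (hω : Measurable ω) {a Y : ℝ}
    (hωa : ∀ s, ω s ≤ a) (haY : a < Y) (Z : ℝ) :
    ∃ C : NNReal, ∀ u : ℝ × ℝ → ℝ × ℝ, ContDiff ℝ 1 u → h1Energy u (layerRY ω Y) ≠ ⊤ →
      ∃ v : ℝ × ℝ → ℝ × ℝ, (∀ n : ℕ∞, ContDiff ℝ n u → ContDiff ℝ n v) ∧
        (∀ p : ℝ × ℝ, p.2 < a → v p = u p) ∧ h1Energy v (layerRY ω Z) ≠ ⊤ ∧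
        strainEnergy v (layerRY ω Z) ≤ C * strainEnergy u (layerRY ω Y) := by
  rcases le_or_gt Z Y with hZY | hYZ
  · have hsub := layerRY_subset_layerRY ω hZY
    refine ⟨1, fun u _ hu_fin => ⟨u, fun _ hu => hu, fun _ _ => rfl,
      ne_top_of_le_ne_top hu_fin (lintegral_mono_set hsub), ?_⟩⟩
    rw [ENNReal.coe_one, one_mul]
    exact lintegral_mono_set hsub
  · obtain ⟨t, c, η, h⟩ := exists_isRamp haY hYZ
    obtain ⟨C, hC⟩ := h.exists_strainEnergy_nitscheExtension_le hω hωa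
    refine ⟨C, fun u hu hu_fin => ⟨nitscheExtension η t u,
      fun n hn => h.contDiff_nitscheExtension hn, fun p hp => h.nitscheExtension_eq u hp,
      ?_, hC u hu⟩⟩
    exact h1Energy_smul_sub_smul_ne_top (measurableSet_layerRY hω Z)
      (contDiff_slidePullback (n := 1) h.contDiff hu 1)
      (contDiff_slidePullback (n := 1) h.contDiff hu t)
      (h.h1Energy_slidePullback_ne_top hω hωa (left_mem_Icc.2 h.one_lt.le) hu hu_fin)
      (h.h1Energy_slidePullback_ne_top hω hωa (right_mem_Icc.2 h.one_lt.le) hu hu_fin) _ _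

theorem lintegralKornProp_of_lintegralKornProp {ω : ℝ → ℝ} (hω : Measurable ω)
    (hω_bdd : BddAbove (range ω)) {Y₀ Y : ℝ} (hY₀ : (⨆ s, ω s) < Y₀) (hY : (⨆ s, ω s) < Y)
    (hkorn : LIntegralKornProp ω Y₀) : LIntegralKornProp ω Y := by
  obtain ⟨C₀, hC₀⟩ := hkorn
  have hω_le : ∀ s, ω s ≤ ⨆ s, ω s := le_ciSup hω_bdd
  obtain ⟨a, ha, haY⟩ := exists_between (lt_min hY₀ hY)
  obtain ⟨haY₀, haY⟩ := lt_min_iff.1 haY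
  have hωa : ∀ s, ω s < a := fun s => (hω_le s).trans_lt ha
  obtain ⟨C₁, hC₁⟩ := exists_l2Energy_layerRY_le hω hω_le ha haY.le
  obtain ⟨C₂, hC₂⟩ := exists_extension_strainEnergy_le hω (fun s => (hωa s).le) haY Y₀
  refine ⟨C₁ * (C₀ * C₂ + 1), fun u hu hu_fin hu_tan => ?_⟩
  have hu' : ContDiff ℝ 1 u := hu.of_le (mod_cast le_top)
  obtain ⟨v, hv, hvu, hv_fin, hv_strain⟩ := hC₂ u hu' hu_fin
  have hv_tan : TangentOn ω v := hu_tan.mono fun s hs => by rwa [hvu _ (hωa s)]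
  have hlow : l2Energy u (layerRY ω a) ≤ C₀ * (C₂ * strainEnergy u (layerRY ω Y)) :=
    calc l2Energy u (layerRY ω a)
        = l2Energy v (layerRY ω a) :=
          setLIntegral_congr_fun (measurableSet_layerRY hω a) fun p hp => by
            simp only [hvu p hp.2]
      _ ≤ l2Energy v (layerRY ω Y₀) := lintegral_mono_set (layerRY_subset_layerRY ω haY₀.le)
      _ ≤ C₀ * strainEnergy v (layerRY ω Y₀) := hC₀ v (hv ⊤ hu) hv_fin hv_tan
      _ ≤ C₀ * (C₂ * strainEnergy u (layerRY ω Y)) := by gcongr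
  calc l2Energy u (layerRY ω Y)
      ≤ C₁ * (l2Energy u (layerRY ω a) + strainEnergy u (layerRY ω Y)) := hC₁ u hu'
    _ ≤ C₁ * (C₀ * (C₂ * strainEnergy u (layerRY ω Y)) + strainEnergy u (layerRY ω Y)) := by
      gcongr
    _ = _ := by
      push_cast
      ring

theorem stmt9_general {ω : ℝ → ℝ} (hω : Measurable ω) (hω_bdd : BddAbove (range ω))
    (h0 : ∃ Y₀ : ℝ, (⨆ t : ℝ, ω t) < Y₀ ∧ KornProp ω Y₀) :
    ∀ Y : ℝ, (⨆ t : ℝ, ω t) < Y → KornProp ω Y := by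
  obtain ⟨Y₀, hY₀, hkorn⟩ := h0
  exact fun Y hY => kornProp_iff_lintegralKornProp.2
    (lintegralKornProp_of_lintegralKornProp hω hω_bdd hY₀ hY
      (kornProp_iff_lintegralKornProp.1 hkorn))

/-- If `ω` is Lipschitz and bounded and `(K_{Y₀})` holds for some `Y₀ > sup ω`, then
`(K_Y)` holds for every `Y > sup ω`. -/
theorem stmt9 (ω : ℝ → ℝ) (K : NNReal) (hlip : LipschitzWith K ω)
    (hbdd : ∃ C : ℝ, ∀ t, |ω t| ≤ C)
    (h0 : ∃ Y₀ : ℝ, (⨆ t : ℝ, ω t) < Y₀ ∧ KornProp ω Y₀) :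
    ∀ Y : ℝ, (⨆ t : ℝ, ω t) < Y → KornProp ω Y := by
  obtain ⟨C, hC⟩ := hbdd
  exact stmt9_general hlip.continuous.measurable
    ⟨C, forall_mem_range.2 fun t => (le_abs_self _).trans (hC t)⟩ h0
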